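/- Energy conservation law for the potential Kawahara–KP equation: if v solves the potential Kawahara–KP equation, then ∂_t T + ∂_x Φˣ + ∂_y Φʸ = 0 holds at every point of ℝ³, where T := (1/2)·(v_xxx² - β·v_xx² + (1/3)·v_x³ - σ·v_y²), Φˣ := (β·v_xx + v_xxxx)·v_tx - (1/2)·v_t² - (β·v_xxx + v_xxxxx + (1/2)·v_x²)·v_t - v_txx·v_xxx, and Φʸ := σ·v_t·v_y, all regarded as functions of (t,x,y) by composing the partial derivatives of v. -/

import Mathlib

/-- Partial derivative in `t` of a function `v (t, x, y)` given in curried form. -/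
noncomputable def pt (v : ℝ → ℝ → ℝ → ℝ) : ℝ → ℝ → ℝ → ℝ :=
  fun t x y => deriv (fun s => v s x y) t

/-- Partial derivative in `x` of a function `v (t, x, y)` given in curried form. -/
noncomputable def px (v : ℝ → ℝ → ℝ → ℝ) : ℝ → ℝ → ℝ → ℝ :=
  fun t x y => deriv (fun s => v t s y) x

/-- Partial derivative in `y` of a function `v (t, x, y)` given in curried form. -/
noncomputable def py (v : ℝ → ℝ → ℝ → ℝ) : ℝ → ℝ → ℝ → ℝ :=
  fun t x y => deriv (fun s => v t x s) y

/-- The potential Kawahara–KP operator: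
`v_tx + v_x·v_xx + β·v_xxxx + v_xxxxxx - σ·v_yy`. -/
noncomputable def KKP (β σ : ℝ) (v : ℝ → ℝ → ℝ → ℝ) : ℝ → ℝ → ℝ → ℝ :=
  fun t x y =>
    px (pt v) t x y + px v t x y * px (px v) t x y
      + β * px (px (px (px v))) t x y
      + px (px (px (px (px (px v))))) t x y
      - σ * py (py v) t x y

/-- The linearization of the potential Kawahara–KP equation at `v`, applied to `p`:
`p_tx + v_xx·p_x + v_x·p_xx + β·p_xxxx + p_xxxxxx - σ·p_yy`. -/
noncomputable def KKPlin (β σ : ℝ) (v p : ℝ → ℝ → ℝ → ℝ) : ℝ → ℝ → ℝ → ℝ :=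
  fun t x y =>
    px (pt p) t x y + px (px v) t x y * px p t x y + px v t x y * px (px p) t x y
      + β * px (px (px (px p))) t x y
      + px (px (px (px (px (px p))))) t x y
      - σ * py (py p) t x y

/-!
Noether's theorem for translation in `t`: multiplying the operator `KKP` by the characteristic
`-v_t` turns it into a divergence identically in `v`, not only along solutions. Expanding the
divergence, every term of `∂_t T` other than `-σ·v_y·v_ty` cancels against `∂_x Φˣ` once mixed
partials are commuted, that one cancels against `∂_y Φʸ`, and what is left is `-v_t·KKP(v)`.
-/

open Function

section PartialDerivatives

theorem fderiv_fderiv_apply_comm {𝕜 E F : Type*} [RCLike 𝕜] [NormedAddCommGroup E]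
    [NormedSpace 𝕜 E] [NormedAddCommGroup F] [NormedSpace 𝕜 F] {g : E → F} {q : E}
    (hg : ContDiffAt 𝕜 2 g q) (a b : E) :
    fderiv 𝕜 (fun p => fderiv 𝕜 g p a) q b = fderiv 𝕜 (fun p => fderiv 𝕜 g p b) q a := by
  have hg' : DifferentiableAt 𝕜 (fderiv 𝕜 g) q :=
    (hg.fderiv_right (m := 1) one_add_one_eq_two.le).differentiableAt one_ne_zero
  have hsymm : IsSymmSndFDerivAt 𝕜 g q := hg.isSymmSndFDerivAt (by simp)
  rw [fderiv_clm_apply hg' (differentiableAt_const a),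
    fderiv_clm_apply hg' (differentiableAt_const b)]
  simpa using hsymm.eq b a

variable {f : ℝ → ℝ → ℝ → ℝ} {n : WithTop ℕ∞}

theorem hasDerivAt_pt (hf : Differentiable ℝ ↿f) (t x y : ℝ) :
    HasDerivAt (fun s => f s x y) (pt f t x y) t :=
  (hf.comp (f := fun s : ℝ => (s, x, y)) (by fun_prop) t).hasDerivAt

theorem hasDerivAt_px (hf : Differentiable ℝ ↿f) (t x y : ℝ) :
    HasDerivAt (fun s => f t s y) (px f t x y) x :=
  (hf.comp (f := fun s : ℝ => (t, s, y)) (by fun_prop) x).hasDerivAt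

theorem hasDerivAt_py (hf : Differentiable ℝ ↿f) (t x y : ℝ) :
    HasDerivAt (fun s => f t x s) (py f t x y) y :=
  (hf.comp (f := fun s : ℝ => (t, x, s)) (by fun_prop) y).hasDerivAt

theorem uncurry_pt (hf : Differentiable ℝ ↿f) :
    ↿(pt f) = fun q => fderiv ℝ ↿f q (1, 0, 0) := by
  funext ⟨t, x, y⟩
  have hline : HasDerivAt (fun s => (s, x, y)) (1, 0, 0) t :=
    (hasDerivAt_id t).prodMk (hasDerivAt_const t (x, y))
  exact ((hf (t, x, y)).hasFDerivAt.comp_hasDerivAt t hline).deriv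

theorem uncurry_px (hf : Differentiable ℝ ↿f) :
    ↿(px f) = fun q => fderiv ℝ ↿f q (0, 1, 0) := by
  funext ⟨t, x, y⟩
  have hline : HasDerivAt (fun s => (t, s, y)) (0, 1, 0) x :=
    (hasDerivAt_const x t).prodMk ((hasDerivAt_id x).prodMk (hasDerivAt_const x y))
  exact ((hf (t, x, y)).hasFDerivAt.comp_hasDerivAt x hline).deriv

theorem uncurry_py (hf : Differentiable ℝ ↿f) :
    ↿(py f) = fun q => fderiv ℝ ↿f q (0, 0, 1) := by
  funext ⟨t, x, y⟩
  have hline : HasDerivAt (fun s => (t, x, s)) (0, 0, 1) y :=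
    (hasDerivAt_const y t).prodMk ((hasDerivAt_const y x).prodMk (hasDerivAt_id y))
  exact ((hf (t, x, y)).hasFDerivAt.comp_hasDerivAt y hline).deriv

theorem contDiff_pt (hf : ContDiff ℝ (n + 1) ↿f) : ContDiff ℝ n ↿(pt f) := by
  rw [uncurry_pt (hf.differentiable (by simp))]
  exact (hf.fderiv_right le_rfl).clm_apply contDiff_const

theorem contDiff_px (hf : ContDiff ℝ (n + 1) ↿f) : ContDiff ℝ n ↿(px f) := by
  rw [uncurry_px (hf.differentiable (by simp))]
  exact (hf.fderiv_right le_rfl).clm_apply contDiff_const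

theorem contDiff_py (hf : ContDiff ℝ (n + 1) ↿f) : ContDiff ℝ n ↿(py f) := by
  rw [uncurry_py (hf.differentiable (by simp))]
  exact (hf.fderiv_right le_rfl).clm_apply contDiff_const

theorem pt_px_comm (hf : ContDiff ℝ 2 ↿f) : pt (px f) = px (pt f) := by
  have hf₁ : Differentiable ℝ ↿f := hf.differentiable two_ne_zero
  have hft : Differentiable ℝ ↿(pt f) := (contDiff_pt (n := 1) hf).differentiable one_ne_zero
  have hfx : Differentiable ℝ ↿(px f) := (contDiff_px (n := 1) hf).differentiable one_ne_zero
  have huncurry : ↿(pt (px f)) = ↿(px (pt f)) := by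
    rw [uncurry_pt hfx, uncurry_px hft, uncurry_px hf₁, uncurry_pt hf₁]
    exact funext fun q => fderiv_fderiv_apply_comm hf.contDiffAt _ _
  exact funext₃ fun t x y => congrFun huncurry (t, x, y)

theorem pt_py_comm (hf : ContDiff ℝ 2 ↿f) : pt (py f) = py (pt f) := by
  have hf₁ : Differentiable ℝ ↿f := hf.differentiable two_ne_zero
  have hft : Differentiable ℝ ↿(pt f) := (contDiff_pt (n := 1) hf).differentiable one_ne_zero
  have hfy : Differentiable ℝ ↿(py f) := (contDiff_py (n := 1) hf).differentiable one_ne_zero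
  have huncurry : ↿(pt (py f)) = ↿(py (pt f)) := by
    rw [uncurry_pt hfy, uncurry_py hft, uncurry_py hf₁, uncurry_pt hf₁]
    exact funext fun q => fderiv_fderiv_apply_comm hf.contDiffAt _ _
  exact funext₃ fun t x y => congrFun huncurry (t, x, y)

theorem contDiff_iterate_px {k : ℕ} (hf : ContDiff ℝ (n + k) ↿f) :
    ContDiff ℝ n ↿(px^[k] f) := by
  induction k generalizing f with
  | zero => simpa using hf
  | succ k ih =>
    rw [Nat.cast_succ, ← add_assoc] at hf
    exact ih (contDiff_px hf)

theorem differentiable_iterate_px {k : ℕ} (hf : ContDiff ℝ n ↿f) (hk : 1 + k ≤ n) :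
    Differentiable ℝ ↿(px^[k] f) :=
  (contDiff_iterate_px (hf.of_le hk)).differentiable one_ne_zero

theorem pt_iterate_px_comm {k : ℕ} (hf : ContDiff ℝ (1 + k) ↿f) :
    pt (px^[k] f) = px^[k] (pt f) := by
  induction k generalizing f with
  | zero => rfl
  | succ k ih =>
    rw [Nat.cast_succ, ← add_assoc] at hf
    have hf₂ : ContDiff ℝ 2 ↿f := hf.of_le (by
      rw [← one_add_one_eq_two]
      gcongr
      exact le_self_add)
    rw [iterate_succ_apply, iterate_succ_apply, ih (contDiff_px hf), pt_px_comm hf₂]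

theorem hasDerivAt_px_iterate_px {k : ℕ} (hf : ContDiff ℝ n ↿f) (hk : 1 + k ≤ n) (t x y : ℝ) :
    HasDerivAt (fun s => px^[k] f t s y) (px^[k + 1] f t x y) x := by
  rw [iterate_succ_apply']
  exact hasDerivAt_px (differentiable_iterate_px hf hk) t x y

theorem hasDerivAt_pt_iterate_px {k : ℕ} (hf : ContDiff ℝ n ↿f) (hk : 1 + k ≤ n)
    (t x y : ℝ) : HasDerivAt (fun s => px^[k] f s x y) (px^[k] (pt f) t x y) t := by
  rw [← pt_iterate_px_comm (hf.of_le hk)]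
  exact hasDerivAt_pt (differentiable_iterate_px hf hk) t x y

end PartialDerivatives

section Energy

/-- The conserved energy density `T` of the potential Kawahara–KP equation. -/
noncomputable def energyDensity (β σ : ℝ) (v : ℝ → ℝ → ℝ → ℝ) : ℝ → ℝ → ℝ → ℝ :=
  fun t x y =>
    (1 / 2) * ((px (px (px v)) t x y) ^ 2 - β * (px (px v) t x y) ^ 2
      + (1 / 3) * (px v t x y) ^ 3 - σ * (py v t x y) ^ 2)

/-- The energy flux `Φˣ` in the `x` direction. -/
noncomputable def energyFluxX (β : ℝ) (v : ℝ → ℝ → ℝ → ℝ) : ℝ → ℝ → ℝ → ℝ :=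
  fun t x y =>
    (β * px (px v) t x y + px (px (px (px v))) t x y) * px (pt v) t x y
      - (1 / 2) * (pt v t x y) ^ 2
      - (β * px (px (px v)) t x y + px (px (px (px (px v)))) t x y
          + (1 / 2) * (px v t x y) ^ 2) * pt v t x y
      - px (px (pt v)) t x y * px (px (px v)) t x y

/-- The energy flux `Φʸ` in the `y` direction. -/
noncomputable def energyFluxY (σ : ℝ) (v : ℝ → ℝ → ℝ → ℝ) : ℝ → ℝ → ℝ → ℝ :=
  fun t x y => σ * pt v t x y * py v t x y

variable (β σ : ℝ) {v : ℝ → ℝ → ℝ → ℝ}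

theorem pt_energyDensity (hv : ContDiff ℝ 4 ↿v) (t x y : ℝ) :
    pt (energyDensity β σ v) t x y =
      px (px (px v)) t x y * px (px (px (pt v))) t x y
        - β * px (px v) t x y * px (px (pt v)) t x y
        + (1 / 2) * (px v t x y) ^ 2 * px (pt v) t x y
        - σ * py v t x y * py (pt v) t x y := by
  have hx : HasDerivAt (fun s => px v s x y) (px (pt v) t x y) t :=
    hasDerivAt_pt_iterate_px (k := 1) hv (by norm_num) t x y
  have hxx : HasDerivAt (fun s => px (px v) s x y) (px (px (pt v)) t x y) t :=
    hasDerivAt_pt_iterate_px (k := 2) hv (by norm_num) t x y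
  have hxxx : HasDerivAt (fun s => px (px (px v)) s x y) (px (px (px (pt v))) t x y) t :=
    hasDerivAt_pt_iterate_px (k := 3) hv (by norm_num) t x y
  have hv₂ : ContDiff ℝ 2 ↿v := hv.of_le (by norm_num)
  have hy : HasDerivAt (fun s => py v s x y) (py (pt v) t x y) t := by
    rw [← pt_py_comm hv₂]
    exact hasDerivAt_pt ((contDiff_py (n := 1) hv₂).differentiable one_ne_zero) t x y
  refine (((((hxxx.pow 2).sub ((hxx.pow 2).const_mul β)).add
    ((hx.pow 3).const_mul (1 / 3))).sub ((hy.pow 2).const_mul σ)).const_mul (1 / 2)).deriv.trans ?_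
  push_cast
  ring

theorem px_energyFluxX (hv : ContDiff ℝ 6 ↿v) (t x y : ℝ) :
    px (energyFluxX β v) t x y =
      β * px (px v) t x y * px (px (pt v)) t x y
        - px (px (px v)) t x y * px (px (px (pt v))) t x y
        - (1 / 2) * (px v t x y) ^ 2 * px (pt v) t x y
        - pt v t x y * (px (pt v) t x y + px v t x y * px (px v) t x y
          + β * px (px (px (px v))) t x y + px (px (px (px (px (px v))))) t x y) := by
  have hx : HasDerivAt (fun s => px v t s y) (px (px v) t x y) x :=
    hasDerivAt_px_iterate_px (k := 1) hv (by norm_num) t x y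
  have hxx : HasDerivAt (fun s => px (px v) t s y) (px (px (px v)) t x y) x :=
    hasDerivAt_px_iterate_px (k := 2) hv (by norm_num) t x y
  have hxxx : HasDerivAt (fun s => px (px (px v)) t s y) (px (px (px (px v))) t x y) x :=
    hasDerivAt_px_iterate_px (k := 3) hv (by norm_num) t x y
  have hxxxx : HasDerivAt (fun s => px (px (px (px v))) t s y)
      (px (px (px (px (px v)))) t x y) x :=
    hasDerivAt_px_iterate_px (k := 4) hv (by norm_num) t x y
  have hxxxxx : HasDerivAt (fun s => px (px (px (px (px v)))) t s y)
      (px (px (px (px (px (px v))))) t x y) x :=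
    hasDerivAt_px_iterate_px (k := 5) hv (by norm_num) t x y
  have hvt : ContDiff ℝ 5 ↿(pt v) := contDiff_pt hv
  have ht : HasDerivAt (fun s => pt v t s y) (px (pt v) t x y) x :=
    hasDerivAt_px_iterate_px (k := 0) hvt (by norm_num) t x y
  have htx : HasDerivAt (fun s => px (pt v) t s y) (px (px (pt v)) t x y) x :=
    hasDerivAt_px_iterate_px (k := 1) hvt (by norm_num) t x y
  have htxx : HasDerivAt (fun s => px (px (pt v)) t s y) (px (px (px (pt v))) t x y) x :=
    hasDerivAt_px_iterate_px (k := 2) hvt (by norm_num) t x y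
  refine ((((((hxx.const_mul β).add hxxxx).mul htx).sub ((ht.pow 2).const_mul (1 / 2))).sub
    ((((hxxx.const_mul β).add hxxxxx).add ((hx.pow 2).const_mul (1 / 2))).mul ht)).sub
    (htxx.mul hxxx)).deriv.trans ?_
  simp only [Pi.add_apply, Pi.pow_apply]
  push_cast
  ring

theorem py_energyFluxY (hv : ContDiff ℝ 2 ↿v) (t x y : ℝ) :
    py (energyFluxY σ v) t x y =
      σ * py v t x y * py (pt v) t x y + pt v t x y * (σ * py (py v) t x y) := by
  have hty : HasDerivAt (fun s => pt v t x s) (py (pt v) t x y) y :=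
    hasDerivAt_py ((contDiff_pt (n := 1) hv).differentiable one_ne_zero) t x y
  have hyy : HasDerivAt (fun s => py v t x s) (py (py v) t x y) y :=
    hasDerivAt_py ((contDiff_py (n := 1) hv).differentiable one_ne_zero) t x y
  refine ((hty.const_mul σ).mul hyy).deriv.trans ?_
  ring

theorem energy_conservation_KKP_general (hv : ContDiff ℝ 6 ↿v) (t x y : ℝ) :
    pt (energyDensity β σ v) t x y + px (energyFluxX β v) t x y + py (energyFluxY σ v) t x y =
      -pt v t x y * KKP β σ v t x y := by
  rw [pt_energyDensity β σ (hv.of_le (by norm_num)), px_energyFluxX β hv,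
    py_energyFluxY σ (hv.of_le (by norm_num)), KKP]
  ring

end Energy

/-- Energy conservation law for the potential Kawahara–KP equation. -/
theorem energy_conservation_KKP (β σ : ℝ) (hβ : β ≠ 0) (hσ : σ = 1 ∨ σ = -1)
    (v : ℝ → ℝ → ℝ → ℝ)
    (hv : ContDiff ℝ (⊤ : ℕ∞) (fun q : ℝ × ℝ × ℝ => v q.1 q.2.1 q.2.2))
    (hsol : ∀ t x y : ℝ, KKP β σ v t x y = 0)
    (T Φx Φy : ℝ → ℝ → ℝ → ℝ)
    (hT : T = fun t x y =>
      (1 / 2) * ((px (px (px v)) t x y) ^ 2 - β * (px (px v) t x y) ^ 2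
        + (1 / 3) * (px v t x y) ^ 3 - σ * (py v t x y) ^ 2))
    (hΦx : Φx = fun t x y =>
      (β * px (px v) t x y + px (px (px (px v))) t x y) * px (pt v) t x y
        - (1 / 2) * (pt v t x y) ^ 2
        - (β * px (px (px v)) t x y + px (px (px (px (px v)))) t x y
            + (1 / 2) * (px v t x y) ^ 2) * pt v t x y
        - px (px (pt v)) t x y * px (px (px v)) t x y)
    (hΦy : Φy = fun t x y => σ * pt v t x y * py v t x y) :
    ∀ t x y : ℝ, pt T t x y + px Φx t x y + py Φy t x y = 0 := by
  subst hT hΦx hΦy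
  intro t x y
  exact (energy_conservation_KKP_general β σ (contDiff_infty.mp hv 6) t x y).trans
    (mul_eq_zero_of_right _ (hsol t x y))
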